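/- Let (X,μ,S,T) be a free ergodic magic measure preserving system with commuting transformations S and T, let f1, f2 ∈ L∞(μ), and let f3 ∈ L∞(μ) satisfy E(f3 | I_S ∨ I_T) = 0. Then (1/N²) Σ_{i=0}^{N-1} Σ_{j=0}^{N-1} f1(S^i x) f2(T^j x) f3(S^i T^j x) converges to 0 for μ-almost every x ∈ X as N → ∞. -/

import Mathlib

open MeasureTheory Filter

/-- The σ-algebra of `R`-invariant measurable sets. -/
def invSigma {X : Type*} [MeasurableSpace X] (R : X → X) : MeasurableSpace X where
  MeasurableSet' s := MeasurableSet s ∧ R ⁻¹' s = s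
  measurableSet_empty := ⟨MeasurableSet.empty, rfl⟩
  measurableSet_compl s hs := ⟨hs.1.compl, by rw [Set.preimage_compl, hs.2]⟩
  measurableSet_iUnion f hf := ⟨MeasurableSet.iUnion fun i => (hf i).1, by
    rw [Set.preimage_iUnion]; exact Set.iUnion_congr fun i => (hf i).2⟩

/-- `μ2` is the relatively independent self-joining of `μ` over `I_R`. -/
def IsRelIndJoining {X : Type*} [MeasurableSpace X] (μ : Measure X) (R : X → X)
    (μ2 : Measure (X × X)) : Prop :=
  ∀ f0 f1 : X → ℝ, Measurable f0 → Measurable f1 →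
    (∃ C, ∀ x, |f0 x| ≤ C) → (∃ C, ∀ x, |f1 x| ≤ C) →
    ∫ p, f0 p.1 * f1 p.2 ∂μ2 =
      ∫ x, (μ[f0 | invSigma R]) x * (μ[f1 | invSigma R]) x ∂μ

/-- `μ4` is the relatively independent self-joining of `μ2` over `I_{T×T}`. -/
def IsHostJoining {X : Type*} [MeasurableSpace X] (μ2 : Measure (X × X)) (T : X → X)
    (μ4 : Measure (X × X × X × X)) : Prop :=
  ∀ f0 f1 f2 f3 : X → ℝ, Measurable f0 → Measurable f1 → Measurable f2 → Measurable f3 →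
    (∃ C, ∀ x, |f0 x| ≤ C) → (∃ C, ∀ x, |f1 x| ≤ C) →
    (∃ C, ∀ x, |f2 x| ≤ C) → (∃ C, ∀ x, |f3 x| ≤ C) →
    ∫ p, f0 p.1 * f1 p.2.1 * f2 p.2.2.1 * f3 p.2.2.2 ∂μ4 =
      ∫ q, (μ2[(fun r => f0 r.1 * f1 r.2) | invSigma (Prod.map T T)]) q *
           (μ2[(fun r => f2 r.1 * f3 r.2) | invSigma (Prod.map T T)]) q ∂μ2

/-- The Host seminorm `|||f|||_{μ,S,T}` of `f`, computed from the Host measure `μ_{S,T}`. -/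
noncomputable def hostSeminorm {X : Type*} [MeasurableSpace X]
    (μ4 : Measure (X × X × X × X)) (f : X → ℝ) : ℝ :=
  (∫ p, f p.1 * f p.2.1 * f p.2.2.1 * f p.2.2.2 ∂μ4) ^ ((1 : ℝ) / 4)

/-!
By two applications of Cauchy–Schwarz, the correlation of an array with product weights `u i * v j`
over a rectangle is at most the box norm of the array there, whatever the bounded `u` and `v` are.
Long averages are averages of averages over translates of a fixed `H × K` block, up to boundary
terms. Hence the cubic averages at `x` tend to `0` as soon as the fourth powers of the block box
norms of `f3 (S^i T^j x)` have small averages along the orbit of `x`. Such a block quantity is a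
nonnegative bounded function on `X`; applying the mean ergodic theorem to `S` on `X` and to `T × T`
on `μ_S`, its integral tends to the fourth power of the Host seminorm of `f3`, which is `0`.
The two-parameter maximal inequality turns this smallness in mean into smallness of all orbit
averages at almost every point.
-/

section Averages

open Finset
open scoped BigOperators Topology

variable {ι κ : Type*} {s : Finset ι} {t : Finset κ}

lemma expect_le_of_forall_le {f : ι → ℝ} {C : ℝ} (hC : 0 ≤ C) (hf : ∀ i ∈ s, f i ≤ C) :
    𝔼 i ∈ s, f i ≤ C := by
  rcases s.eq_empty_or_nonempty with rfl | hs
  · rwa [expect_empty]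
  · exact expect_le hs hf

lemma abs_expect_le_of_forall_abs_le {f : ι → ℝ} {C : ℝ} (hC : 0 ≤ C)
    (hf : ∀ i ∈ s, |f i| ≤ C) : |𝔼 i ∈ s, f i| ≤ C :=
  (abs_expect_le s f).trans (expect_le_of_forall_le hC hf)

lemma tendsto_expect {α : Type*} {l : Filter α} {f : ι → α → ℝ} {c : ι → ℝ}
    (hf : ∀ i ∈ s, Tendsto (f i) l (𝓝 (c i))) :
    Tendsto (fun x => 𝔼 i ∈ s, f i x) l (𝓝 (𝔼 i ∈ s, c i)) := by
  simp only [expect_eq_sum_div_card]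
  exact (tendsto_finsetSum s hf).div_const _

lemma expect_mul_sq_le_of_forall_abs_le {w f : ι → ℝ} {C : ℝ} (hw : ∀ i ∈ s, |w i| ≤ C) :
    (𝔼 i ∈ s, w i * f i) ^ 2 ≤ C ^ 2 * 𝔼 i ∈ s, f i ^ 2 := by
  refine (expect_mul_sq_le_sq_mul_sq s w f).trans ?_
  gcongr
  exact expect_le_of_forall_le (sq_nonneg C) fun i hi =>
    sq_le_sq.2 ((hw i hi).trans (le_abs_self C))

lemma expect_pow_four_le (s : Finset ι) (f : ι → ℝ) :
    (𝔼 i ∈ s, f i) ^ 4 ≤ 𝔼 i ∈ s, f i ^ 4 := by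
  have expect_sq_le (g : ι → ℝ) : (𝔼 i ∈ s, g i) ^ 2 ≤ 𝔼 i ∈ s, g i ^ 2 := by
    simpa only [one_mul, one_pow] using
      expect_mul_sq_le_of_forall_abs_le (w := fun _ => 1) (f := g) (fun i _ => abs_one.le)
  calc (𝔼 i ∈ s, f i) ^ 4 = ((𝔼 i ∈ s, f i) ^ 2) ^ 2 := by ring
    _ ≤ (𝔼 i ∈ s, f i ^ 2) ^ 2 := by gcongr; exact expect_sq_le f
    _ ≤ 𝔼 i ∈ s, (f i ^ 2) ^ 2 := expect_sq_le _
    _ = 𝔼 i ∈ s, f i ^ 4 := by simp only [← pow_mul, Nat.reduceMul]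

/-- The fourth power of the box norm of the array `a` over the rectangle `s × t`: the average of
`a i j * a i j' * a i' j * a i' j'`, with the squares over `i, i'` completed. -/
noncomputable def boxAverage (s : Finset ι) (t : Finset κ) (a : ι → κ → ℝ) : ℝ :=
  𝔼 j ∈ t, 𝔼 j' ∈ t, (𝔼 i ∈ s, a i j * a i j') ^ 2

lemma boxAverage_nonneg (s : Finset ι) (t : Finset κ) (a : ι → κ → ℝ) : 0 ≤ boxAverage s t a :=
  expect_nonneg fun _ _ => expect_nonneg fun _ _ => sq_nonneg _

lemma boxAverage_le_pow_four {a : ι → κ → ℝ} {C : ℝ} (ha : ∀ i j, |a i j| ≤ C) :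
    boxAverage s t a ≤ C ^ 4 := by
  have correlation_sq_le (j j' : κ) : (𝔼 i ∈ s, a i j * a i j') ^ 2 ≤ C ^ 4 := by
    calc (𝔼 i ∈ s, a i j * a i j') ^ 2
        ≤ C ^ 2 * 𝔼 i ∈ s, a i j' ^ 2 := expect_mul_sq_le_of_forall_abs_le fun i _ => ha i j
      _ ≤ C ^ 2 * C ^ 2 := by
          gcongr
          exact expect_le_of_forall_le (sq_nonneg C) fun i _ =>
            sq_le_sq.2 ((ha i j').trans (le_abs_self C))
      _ = C ^ 4 := by ring
  have hC : 0 ≤ C ^ 4 := by positivity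
  exact expect_le_of_forall_le hC fun j _ =>
    expect_le_of_forall_le hC fun j' _ => correlation_sq_le j j'

lemma expect_sq_expect_eq_expect_product (v : κ → ℝ) (a : ι → κ → ℝ) :
    𝔼 i ∈ s, (𝔼 j ∈ t, v j * a i j) ^ 2 =
      𝔼 z ∈ t ×ˢ t, (v z.1 * v z.2) * 𝔼 i ∈ s, a i z.1 * a i z.2 := by
  simp only [mul_expect]
  rw [expect_comm]
  refine expect_congr rfl fun i _ => ?_
  rw [sq, expect_mul_expect, expect_product]
  simp only [mul_mul_mul_comm]

lemma expect_mul_mul_pow_four_le_boxAverage {u : ι → ℝ} {v : κ → ℝ} {C D : ℝ}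
    (hu : ∀ i ∈ s, |u i| ≤ C) (hv : ∀ j ∈ t, |v j| ≤ D) (a : ι → κ → ℝ) :
    (𝔼 i ∈ s, 𝔼 j ∈ t, u i * v j * a i j) ^ 4 ≤ C ^ 4 * D ^ 4 * boxAverage s t a := by
  have hvv : ∀ z ∈ t ×ˢ t, |v z.1 * v z.2| ≤ D ^ 2 := fun z hz => by
    obtain ⟨h₁, h₂⟩ := mem_product.1 hz
    rw [abs_mul, sq]
    exact mul_le_mul (hv _ h₁) (hv _ h₂) (abs_nonneg _) ((abs_nonneg _).trans (hv _ h₁))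
  calc (𝔼 i ∈ s, 𝔼 j ∈ t, u i * v j * a i j) ^ 4
      = ((𝔼 i ∈ s, u i * 𝔼 j ∈ t, v j * a i j) ^ 2) ^ 2 := by
        simp only [mul_expect, mul_assoc, ← pow_mul, Nat.reduceMul]
    _ ≤ (C ^ 2 * 𝔼 i ∈ s, (𝔼 j ∈ t, v j * a i j) ^ 2) ^ 2 := by
        gcongr
        exact expect_mul_sq_le_of_forall_abs_le hu
    _ = C ^ 4 * (𝔼 z ∈ t ×ˢ t, (v z.1 * v z.2) * 𝔼 i ∈ s, a i z.1 * a i z.2) ^ 2 := by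
        rw [expect_sq_expect_eq_expect_product]; ring
    _ ≤ C ^ 4 * ((D ^ 2) ^ 2 * 𝔼 z ∈ t ×ˢ t, (𝔼 i ∈ s, a i z.1 * a i z.2) ^ 2) := by
        gcongr
        exact expect_mul_sq_le_of_forall_abs_le hvv
    _ = C ^ 4 * D ^ 4 * boxAverage s t a := by
        rw [expect_product, boxAverage]; ring

lemma inv_sq_mul_sum_sum_eq_expect_expect (W : ℕ → ℕ → ℝ) (N : ℕ) :
    ((N : ℝ) ^ 2)⁻¹ * ∑ p ∈ range N, ∑ q ∈ range N, W p q =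
      𝔼 p ∈ range N, 𝔼 q ∈ range N, W p q := by
  simp only [expect_eq_sum_div_card, card_range, ← sum_div]
  rw [div_div, ← sq, inv_mul_eq_div]

lemma abs_expect_range_add_sub_le {w : ℕ → ℝ} {C : ℝ} (hw : ∀ p, |w p| ≤ C) (N i : ℕ) :
    |𝔼 p ∈ range N, w (p + i) - 𝔼 p ∈ range N, w p| ≤ 2 * i * C / N := by
  have telescope : ∑ p ∈ range N, w (p + i) - ∑ p ∈ range N, w p =
      ∑ p ∈ range i, w (N + p) - ∑ p ∈ range i, w p := by
    have h₁ := sum_range_add w N i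
    have h₂ := sum_range_add w i N
    rw [add_comm i N] at h₂
    simp only [add_comm _ i]
    linarith
  have abs_sum_le (z : ℕ → ℝ) (hz : ∀ p, |z p| ≤ C) : |∑ p ∈ range i, z p| ≤ i * C := by
    simpa using (abs_sum_le_sum_abs z _).trans (sum_le_card_nsmul (range i) _ C fun p _ => hz p)
  rw [expect_eq_sum_div_card, expect_eq_sum_div_card, card_range, ← sub_div, telescope, abs_div,
    Nat.abs_cast]
  gcongr
  calc |∑ p ∈ range i, w (N + p) - ∑ p ∈ range i, w p|
      ≤ |∑ p ∈ range i, w (N + p)| + |∑ p ∈ range i, w p| := abs_sub _ _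
    _ ≤ i * C + i * C := add_le_add (abs_sum_le _ fun p => hw _) (abs_sum_le w hw)
    _ = 2 * i * C := by ring

lemma tendsto_expect_expect_shift_sub {W : ℕ → ℕ → ℝ} {C : ℝ} (hW : ∀ p q, |W p q| ≤ C)
    (i j : ℕ) :
    Tendsto (fun N : ℕ => 𝔼 p ∈ range N, 𝔼 q ∈ range N, W (p + i) (q + j) -
      𝔼 p ∈ range N, 𝔼 q ∈ range N, W p q) atTop (𝓝 0) := by
  have hC : 0 ≤ C := (abs_nonneg _).trans (hW 0 0)
  refine squeeze_zero_norm (fun N => ?_)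
    (tendsto_const_div_atTop_nhds_zero_nat (2 * i * C + 2 * j * C))
  have rows : |𝔼 p ∈ range N, 𝔼 q ∈ range N, W (p + i) (q + j) -
      𝔼 p ∈ range N, 𝔼 q ∈ range N, W p (q + j)| ≤ 2 * i * C / N :=
    abs_expect_range_add_sub_le
      (fun p => abs_expect_le_of_forall_abs_le hC fun q _ => hW p (q + j)) N i
  have columns : |𝔼 p ∈ range N, 𝔼 q ∈ range N, W p (q + j) -
      𝔼 p ∈ range N, 𝔼 q ∈ range N, W p q| ≤ 2 * j * C / N := by
    rw [← expect_sub_distrib]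
    exact abs_expect_le_of_forall_abs_le (by positivity) fun p _ =>
      abs_expect_range_add_sub_le (hW p) N j
  rw [Real.norm_eq_abs, add_div]
  exact (abs_sub_le _ _ _).trans (add_le_add rows columns)

lemma tendsto_expect_expect_block_sub {W : ℕ → ℕ → ℝ} {C : ℝ} (hW : ∀ p q, |W p q| ≤ C)
    {s t : Finset ℕ} (hs : s.Nonempty) (ht : t.Nonempty) :
    Tendsto (fun N : ℕ =>
      𝔼 p ∈ range N, 𝔼 q ∈ range N, 𝔼 i ∈ s, 𝔼 j ∈ t, W (p + i) (q + j) -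
        𝔼 p ∈ range N, 𝔼 q ∈ range N, W p q) atTop (𝓝 0) := by
  have averaged_shifts : Tendsto (fun N : ℕ => 𝔼 z ∈ s ×ˢ t,
      (𝔼 p ∈ range N, 𝔼 q ∈ range N, W (p + z.1) (q + z.2) -
        𝔼 p ∈ range N, 𝔼 q ∈ range N, W p q)) atTop (𝓝 0) := by
    simpa only [expect_const_zero] using
      tendsto_expect (s := s ×ˢ t) fun z _ => tendsto_expect_expect_shift_sub hW z.1 z.2
  refine averaged_shifts.congr fun N => ?_
  rw [expect_sub_distrib, expect_const (hs.product ht), expect_comm]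
  simp only [expect_comm (s ×ˢ t), expect_product]

lemma expect_expect_block_pow_four_le {u v : ℕ → ℝ} {C D : ℝ} (hu : ∀ i, |u i| ≤ C)
    (hv : ∀ j, |v j| ≤ D) (a : ℕ → ℕ → ℝ) (P Q s t : Finset ℕ) :
    (𝔼 p ∈ P, 𝔼 q ∈ Q, 𝔼 i ∈ s, 𝔼 j ∈ t, u (p + i) * v (q + j) * a (p + i) (q + j)) ^ 4 ≤
      C ^ 4 * D ^ 4 * 𝔼 p ∈ P, 𝔼 q ∈ Q, boxAverage s t (fun i j => a (p + i) (q + j)) := by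
  simp only [mul_expect]
  refine (expect_pow_four_le _ _).trans (expect_le_expect fun p _ => ?_)
  refine (expect_pow_four_le _ _).trans (expect_le_expect fun q _ => ?_)
  exact expect_mul_mul_pow_four_le_boxAverage (fun i _ => hu _) (fun j _ => hv _) _

theorem tendsto_expect_expect_mul_mul_of_boxAverage {a : ℕ → ℕ → ℝ} {A : ℝ}
    (ha : ∀ i j, |a i j| ≤ A)
    (hbox : ∀ ε > 0, ∃ H > 0, ∃ K > 0, ∀ᶠ N in atTop, 𝔼 p ∈ range N, 𝔼 q ∈ range N,
      boxAverage (range H) (range K) (fun i j => a (p + i) (q + j)) ≤ ε)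
    {u v : ℕ → ℝ} {C D : ℝ} (hu : ∀ i, |u i| ≤ C) (hv : ∀ j, |v j| ≤ D) :
    Tendsto (fun N : ℕ => 𝔼 i ∈ range N, 𝔼 j ∈ range N, u i * v j * a i j) atTop (𝓝 0) := by
  rw [Metric.tendsto_nhds]
  intro η hη
  obtain ⟨H, hH, K, hK, hHK⟩ := hbox ((η / 2) ^ 4 / (C ^ 4 * D ^ 4 + 1)) (by positivity)
  have weighted_le (p q : ℕ) : |u p * v q * a p q| ≤ C * D * A := by
    have hC := (abs_nonneg _).trans (hu p)
    have hD := (abs_nonneg _).trans (hv q)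
    rw [abs_mul, abs_mul]
    gcongr
    exacts [hu p, hv q, ha p q]
  have block_sub := tendsto_expect_expect_block_sub weighted_le (nonempty_range_iff.2 hH.ne')
    (nonempty_range_iff.2 hK.ne')
  filter_upwards [hHK, Metric.tendsto_nhds.1 block_sub (η / 2) (half_pos hη)] with N hN hdiff
  set block := 𝔼 p ∈ range N, 𝔼 q ∈ range N, 𝔼 i ∈ range H, 𝔼 j ∈ range K,
    u (p + i) * v (q + j) * a (p + i) (q + j)
  have abs_block_le : |block| ≤ η / 2 := by
    refine (pow_le_pow_iff_left₀ (abs_nonneg _) (half_pos hη).le four_ne_zero).1 ?_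
    calc |block| ^ 4 = block ^ 4 := Even.pow_abs (by decide) block
      _ ≤ C ^ 4 * D ^ 4 * ((η / 2) ^ 4 / (C ^ 4 * D ^ 4 + 1)) :=
          (expect_expect_block_pow_four_le hu hv a _ _ _ _).trans (by gcongr)
      _ ≤ (η / 2) ^ 4 := by
          rw [mul_div_assoc', div_le_iff₀ (by positivity)]
          nlinarith [show 0 < (η / 2) ^ 4 by positivity]
  rw [Real.dist_0_eq_abs, abs_sub_comm] at hdiff
  rw [Real.dist_0_eq_abs]
  linarith [abs_sub_abs_le_abs_sub (𝔼 p ∈ range N, 𝔼 q ∈ range N, u p * v q * a p q) block]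

end Averages

section Integrals

open Finset
open scoped BigOperators

variable {X ι : Type*} [MeasurableSpace X] {μ : Measure X} {s : Finset ι}
  {g : ι → X → ℝ}

lemma measurable_expect (hg : ∀ i ∈ s, Measurable (g i)) :
    Measurable fun x => 𝔼 i ∈ s, g i x := by
  simp only [expect_eq_sum_div_card]
  exact (Finset.measurable_fun_sum s hg).div_const _

lemma integrable_expect (hg : ∀ i ∈ s, Integrable (g i) μ) :
    Integrable (fun x => 𝔼 i ∈ s, g i x) μ := by
  simp only [expect_eq_sum_div_card]
  exact (integrable_finsetSum s hg).div_const _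

lemma integral_expect (hg : ∀ i ∈ s, Integrable (g i) μ) :
    ∫ x, 𝔼 i ∈ s, g i x ∂μ = 𝔼 i ∈ s, ∫ x, g i x ∂μ := by
  simp only [expect_eq_sum_div_card, integral_div, integral_finsetSum s hg]

lemma integral_comp_of_measurePreserving {Y : Type*} [MeasurableSpace Y]
    {ν : Measure Y} {R : X → Y} (hR : MeasurePreserving R μ ν) {f : Y → ℝ}
    (hf : AEStronglyMeasurable f ν) : ∫ x, f (R x) ∂μ = ∫ y, f y ∂ν := by
  rw [← integral_map hR.measurable.aemeasurable (by rwa [hR.map_eq]), hR.map_eq]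

lemma exists_forall_abs_mul_le {α : Type*} {f g : α → ℝ} (hf : ∃ C, ∀ x, |f x| ≤ C)
    (hg : ∃ C, ∀ x, |g x| ≤ C) : ∃ C, ∀ x, |f x * g x| ≤ C := by
  obtain ⟨C, hC⟩ := hf
  obtain ⟨D, hD⟩ := hg
  refine ⟨C * D, fun x => ?_⟩
  rw [abs_mul]
  exact mul_le_mul (hC x) (hD x) (abs_nonneg _) ((abs_nonneg _).trans (hC x))

lemma memLp_of_exists_forall_abs_le [IsFiniteMeasure μ] {p : ENNReal} {f : X → ℝ}
    (hf : Measurable f) (hb : ∃ C, ∀ x, |f x| ≤ C) : MemLp f p μ :=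
  hb.elim fun C hC => .of_bound hf.aestronglyMeasurable C (ae_of_all _ hC)

end Integrals

section MaximalErgodic

open Finset
open scoped BigOperators Topology

variable {X : Type*} {R : X → X} {f : X → ℝ}

lemma birkhoffAverage_eq_expect (R : X → X) (f : X → ℝ) (n : ℕ) (x : X) :
    birkhoffAverage ℝ R f n x = 𝔼 k ∈ range n, f (R^[k] x) := by
  rw [birkhoffAverage, birkhoffSum, expect_eq_sum_div_card, card_range, smul_eq_mul,
    inv_mul_eq_div]

/-- The running maximum of the Birkhoff sums of `f` over the times `0, …, n`; the empty sum at
time `0` makes it nonnegative. -/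
def maxBirkhoffSum (R : X → X) (f : X → ℝ) (n : ℕ) : X → ℝ :=
  partialSups (birkhoffSum R f) n

lemma maxBirkhoffSum_succ (R : X → X) (f : X → ℝ) (n : ℕ) :
    maxBirkhoffSum R f (n + 1) = maxBirkhoffSum R f n ⊔ birkhoffSum R f (n + 1) :=
  partialSups_add_one _ n

lemma birkhoffSum_le_maxBirkhoffSum {k n : ℕ} (hk : k ≤ n) (x : X) :
    birkhoffSum R f k x ≤ maxBirkhoffSum R f n x :=
  le_partialSups_of_le (birkhoffSum R f) hk x

lemma exists_maxBirkhoffSum_eq (R : X → X) (f : X → ℝ) (n : ℕ) (x : X) :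
    ∃ k ≤ n, maxBirkhoffSum R f n x = birkhoffSum R f k x := by
  rw [maxBirkhoffSum, Pi.partialSups_apply]
  exact exists_partialSups_eq (birkhoffSum R f · x) n

lemma maxBirkhoffSum_pos_iff {n : ℕ} {x : X} :
    0 < maxBirkhoffSum R f n x ↔ ∃ k ≤ n, 0 < birkhoffSum R f k x := by
  refine ⟨fun h => ?_, fun ⟨k, hk, h⟩ => h.trans_le (birkhoffSum_le_maxBirkhoffSum hk x)⟩
  obtain ⟨k, hk, hmax⟩ := exists_maxBirkhoffSum_eq R f n x
  exact ⟨k, hk, hmax ▸ h⟩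

lemma maxBirkhoffSum_sub_comp_le_indicator (n : ℕ) (x : X) :
    maxBirkhoffSum R f n x - maxBirkhoffSum R f n (R x) ≤
      {x | 0 < maxBirkhoffSum R f n x}.indicator f x := by
  by_cases hpos : 0 < maxBirkhoffSum R f n x
  · rw [Set.indicator_of_mem (by exact hpos)]
    obtain ⟨k, hk, hmax⟩ := exists_maxBirkhoffSum_eq R f n x
    rw [hmax] at hpos ⊢
    obtain _ | k := k
    · exact absurd hpos (birkhoffSum_zero R f x).le.not_gt
    · rw [birkhoffSum_succ']
      linarith [birkhoffSum_le_maxBirkhoffSum (R := R) (f := f) (Nat.le_of_succ_le hk) (R x)]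
  · rw [Set.indicator_of_notMem (by exact hpos)]
    linarith [birkhoffSum_le_maxBirkhoffSum (R := R) (f := f) n.zero_le (R x),
      birkhoffSum_zero R f (R x)]

variable [MeasurableSpace X] {μ : Measure X}

lemma measurable_birkhoffSum (hR : Measurable R) (hf : Measurable f) (n : ℕ) :
    Measurable (birkhoffSum R f n) :=
  Finset.measurable_sum _ fun i _ => hf.comp (hR.iterate i)

lemma integrable_birkhoffSum (hR : MeasurePreserving R μ μ) (hf : Integrable f μ) (n : ℕ) :
    Integrable (birkhoffSum R f n) μ :=
  integrable_finsetSum _ fun i _ => (hR.iterate i).integrable_comp_of_integrable hf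

lemma measurable_maxBirkhoffSum (hR : Measurable R) (hf : Measurable f) (n : ℕ) :
    Measurable (maxBirkhoffSum R f n) := by
  induction n with
  | zero => exact measurable_birkhoffSum hR hf 0
  | succ n ih => exact maxBirkhoffSum_succ R f n ▸ ih.sup (measurable_birkhoffSum hR hf _)

lemma integrable_maxBirkhoffSum (hR : MeasurePreserving R μ μ) (hf : Integrable f μ) (n : ℕ) :
    Integrable (maxBirkhoffSum R f n) μ := by
  induction n with
  | zero => exact integrable_birkhoffSum hR hf 0
  | succ n ih => exact maxBirkhoffSum_succ R f n ▸ ih.sup (integrable_birkhoffSum hR hf _)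

theorem setIntegral_exists_birkhoffSum_pos_nonneg (hR : MeasurePreserving R μ μ)
    (hf : Measurable f) (hfi : Integrable f μ) :
    0 ≤ ∫ x in {x | ∃ n, 0 < birkhoffSum R f n x}, f x ∂μ := by
  set E : ℕ → Set X := fun n => {x | 0 < maxBirkhoffSum R f n x}
  have hE (n : ℕ) : MeasurableSet (E n) :=
    measurableSet_lt measurable_const (measurable_maxBirkhoffSum hR.measurable hf n)
  have E_mono : Monotone E := fun m n hmn x hx =>
    hx.trans_le ((partialSups (birkhoffSum R f)).monotone hmn x)
  have iUnion_E : ⋃ n, E n = {x | ∃ n, 0 < birkhoffSum R f n x} := by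
    ext x
    simp only [E, Set.mem_iUnion, Set.mem_ofPred_eq, maxBirkhoffSum_pos_iff]
    exact ⟨fun ⟨_, k, _, h⟩ => ⟨k, h⟩, fun ⟨k, h⟩ => ⟨k, k, le_rfl, h⟩⟩
  have setIntegral_nonneg (n : ℕ) : 0 ≤ ∫ x in E n, f x ∂μ := by
    have hM := integrable_maxBirkhoffSum hR hfi n
    have hMR : Integrable (fun x => maxBirkhoffSum R f n (R x)) μ :=
      hR.integrable_comp_of_integrable hM
    calc 0 = ∫ x, (maxBirkhoffSum R f n x - maxBirkhoffSum R f n (R x)) ∂μ := by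
          rw [integral_sub hM hMR,
            integral_comp_of_measurePreserving hR hM.aestronglyMeasurable, sub_self]
      _ ≤ ∫ x, (E n).indicator f x ∂μ :=
          integral_mono (hM.sub hMR) (hfi.indicator (hE n)) (maxBirkhoffSum_sub_comp_le_indicator n)
      _ = ∫ x in E n, f x ∂μ := integral_indicator (hE n)
  rw [← iUnion_E]
  exact ge_of_tendsto' (tendsto_setIntegral_of_monotone hE E_mono hfi.integrableOn)
    setIntegral_nonneg

lemma measurableSet_exists_lt_birkhoffAverage (hR : Measurable R) (hf : Measurable f) (l : ℝ) :
    MeasurableSet {x | ∃ n, l < birkhoffAverage ℝ R f n x} := by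
  rw [Set.ofPred_exists]
  exact MeasurableSet.iUnion fun n =>
    measurableSet_lt measurable_const ((measurable_birkhoffSum hR hf n).const_smul (n : ℝ)⁻¹)

theorem mul_measureReal_exists_lt_birkhoffAverage_le [IsFiniteMeasure μ]
    (hR : MeasurePreserving R μ μ) (hf : Measurable f) (hfi : Integrable f μ) (hf₀ : ∀ x, 0 ≤ f x)
    {l : ℝ} (hl : 0 ≤ l) :
    l * μ.real {x | ∃ n, l < birkhoffAverage ℝ R f n x} ≤ ∫ x, f x ∂μ := by
  have lt_iff (n : ℕ) (x : X) :
      l < birkhoffAverage ℝ R f n x ↔ 0 < birkhoffSum R (fun y => f y - l) n x := by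
    rcases n.eq_zero_or_pos with rfl | hn
    · simpa only [birkhoffAverage_zero, birkhoffSum_zero, lt_irrefl, iff_false, not_lt] using hl
    · have hn' : (0 : ℝ) < n := Nat.cast_pos.2 hn
      simp only [birkhoffAverage, birkhoffSum, smul_eq_mul, lt_inv_mul_iff₀ hn', sum_sub_distrib,
        sum_const, card_range, nsmul_eq_mul, sub_pos]
  have hnonneg := setIntegral_exists_birkhoffSum_pos_nonneg hR (hf.sub_const l)
    (hfi.sub (integrable_const l))
  simp only [← lt_iff] at hnonneg
  rw [integral_sub hfi.integrableOn (integrable_const l).integrableOn, setIntegral_const,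
    smul_eq_mul, mul_comm, sub_nonneg] at hnonneg
  exact hnonneg.trans (setIntegral_le_integral hfi (ae_of_all _ hf₀))

/-- A double average splits into averages along the orbits of `T` and of `S`. Where the maximal
function of the inner averages is at most `ε / 2` they contribute at most `ε / 2`; the exceptional
set is small, and its visits along the `S`-orbits are controlled by the maximal inequality. -/
theorem sq_mul_measureReal_exists_lt_expect_expect_le [IsFiniteMeasure μ] {S T : X → X}
    (hS : MeasurePreserving S μ μ) (hT : MeasurePreserving T μ μ) (hf : Measurable f)
    (hf₀ : ∀ x, 0 ≤ f x) {b : ℝ} (hfb : ∀ x, f x ≤ b) {ε : ℝ} (hε : 0 < ε) :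
    ε ^ 2 * μ.real {x | ∃ N : ℕ, ε < 𝔼 p ∈ range N, 𝔼 q ∈ range N, f (T^[q] (S^[p] x))} ≤
      4 * b * ∫ x, f x ∂μ := by
  rcases isEmpty_or_nonempty X with hX | ⟨⟨x₀⟩⟩
  · simp only [measureReal_def, Subsingleton.elim μ 0, Measure.coe_zero, Pi.zero_apply,
      ENNReal.toReal_zero, mul_zero, integral_zero_measure, le_refl]
  have hb : 0 ≤ b := (hf₀ x₀).trans (hfb x₀)
  have hfi : Integrable f μ := .of_bound hf.aestronglyMeasurable b
    (ae_of_all _ fun x => (Real.norm_of_nonneg (hf₀ x)).trans_le (hfb x))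
  set E : Set X := {x | ∃ n, ε / 2 < birkhoffAverage ℝ T f n x}
  have hE : MeasurableSet E := measurableSet_exists_lt_birkhoffAverage hT.measurable hf _
  set h : X → ℝ := E.indicator fun _ => b
  have hh : Measurable h := measurable_const.indicator hE
  have hh₀ (x : X) : 0 ≤ h x := Set.indicator_nonneg (fun _ _ => hb) x
  have inner_le (N : ℕ) (x : X) : 𝔼 q ∈ range N, f (T^[q] x) ≤ ε / 2 + h x := by
    by_cases hx : x ∈ E
    · rw [show h x = b from Set.indicator_of_mem hx _]
      exact expect_le_of_forall_le (by positivity) fun q _ => (hfb _).trans (by linarith)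
    · rw [← birkhoffAverage_eq_expect]
      exact (not_lt.1 fun hlt => hx ⟨N, hlt⟩).trans (le_add_of_nonneg_right (hh₀ x))
  have subset : {x | ∃ N : ℕ, ε < 𝔼 p ∈ range N, 𝔼 q ∈ range N, f (T^[q] (S^[p] x))} ⊆
      {x | ∃ N, ε / 2 < birkhoffAverage ℝ S h N x} := by
    rintro x ⟨N, hN⟩
    refine ⟨N, ?_⟩
    have hN' := hN.trans_le (expect_le_expect fun p _ => inner_le N (S^[p] x))
    rw [expect_add_distrib, ← birkhoffAverage_eq_expect] at hN'
    have := expect_le_of_forall_le (s := range N) (half_pos hε).le fun _ _ => le_rfl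
    linarith
  have outer := mul_measureReal_exists_lt_birkhoffAverage_le hS hh
    ((integrable_const b).indicator hE) hh₀ (half_pos hε).le
  rw [integral_indicator_const b hE, smul_eq_mul] at outer
  have inner := mul_measureReal_exists_lt_birkhoffAverage_le hT hf hfi hf₀ (half_pos hε).le
  calc _ ≤ ε ^ 2 * μ.real {x | ∃ N, ε / 2 < birkhoffAverage ℝ S h N x} := by
        gcongr
        exact measure_ne_top μ _
    _ ≤ 2 * ε * (μ.real E * b) := by nlinarith
    _ ≤ 4 * b * ∫ x, f x ∂μ := by nlinarith

lemma ae_forall_exists_forall_expect_expect_le [IsFiniteMeasure μ] {S T : X → X}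
    (hS : MeasurePreserving S μ μ) (hT : MeasurePreserving T μ μ) {ι : Type*} {g : ι → X → ℝ}
    (hg : ∀ i, Measurable (g i)) (hg₀ : ∀ i x, 0 ≤ g i x) {b : ℝ} (hgb : ∀ i x, g i x ≤ b)
    (hsmall : ∀ δ > 0, ∃ i, ∫ x, g i x ∂μ < δ) :
    ∀ᵐ x ∂μ, ∀ ε > 0, ∃ i, ∀ N : ℕ, 𝔼 p ∈ range N, 𝔼 q ∈ range N, g i (T^[q] (S^[p] x)) ≤ ε := by
  rcases isEmpty_or_nonempty X with hX | ⟨⟨x₀⟩⟩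
  · exact ae_of_all _ fun x => isEmptyElim x
  have bad_null {ε : ℝ} (hε : 0 < ε) : ∀ᵐ x ∂μ, ∃ i, ∀ N : ℕ,
      𝔼 p ∈ range N, 𝔼 q ∈ range N, g i (T^[q] (S^[p] x)) ≤ ε := by
    rw [ae_iff, ← measureReal_eq_zero_iff]
    refine le_antisymm (le_of_forall_pos_le_add fun δ hδ => ?_) measureReal_nonneg
    obtain ⟨i, hi⟩ := hsmall (δ * ε ^ 2 / (4 * |b| + 1)) (by positivity)
    have hb : 0 ≤ b := (hg₀ i x₀).trans (hgb i x₀)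
    rw [abs_of_nonneg hb, lt_div_iff₀ (by positivity)] at hi
    refine (measureReal_mono (fun x hx => ?_) (measure_ne_top μ _)).trans
      (b := μ.real {x | ∃ N : ℕ, ε < 𝔼 p ∈ range N, 𝔼 q ∈ range N, g i (T^[q] (S^[p] x))}) ?_
    · by_contra hgood
      exact hx ⟨i, fun N => not_lt.1 fun hN => hgood ⟨N, hN⟩⟩
    · have weak_type :=
        sq_mul_measureReal_exists_lt_expect_expect_le hS hT (hg i) (hg₀ i) (hgb i) hε
      have : 0 ≤ ∫ x, g i x ∂μ := integral_nonneg (hg₀ i)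
      rw [zero_add, ← mul_le_mul_iff_of_pos_left (sq_pos_of_pos hε)]
      nlinarith
  filter_upwards [ae_all_iff.2 fun m : ℕ => bad_null (Nat.one_div_pos_of_nat (n := m))]
    with x hx ε hε
  obtain ⟨m, hm⟩ := exists_nat_one_div_lt hε
  exact (hx m).imp fun i hi N => (hi N).trans hm.le

end MaximalErgodic

section MeanErgodic

open MeasurableSpace (invariants invariants_le)
open scoped Topology ENNReal

variable {X : Type*} [MeasurableSpace X] {μ : Measure X} {R : X → X} {f : X → ℝ}

lemma exists_measurable_invariants_ae_eq (hR : Measure.QuasiMeasurePreserving R μ μ)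
    (hf : Measurable f) (hfR : f ∘ R =ᵐ[μ] f) :
    ∃ g : X → ℝ, Measurable[invariants R] g ∧ f =ᵐ[μ] g := by
  have iterate_eq (n : ℕ) : ∀ᵐ x ∂μ, f (R^[n] x) = f x := by
    induction n with
    | zero => exact ae_of_all _ fun x => rfl
    | succ n ih =>
      filter_upwards [hR.ae ih, hfR] with x hn h₁
      rw [Function.iterate_succ_apply, hn]
      exact h₁
  refine ⟨fun x => limsup (fun n : ℕ => f (R^[n] x)) atTop, ?_, ?_⟩
  · have limsup_comp (x : X) : limsup (fun n : ℕ => f (R^[n] (R x))) atTop =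
        limsup (fun n : ℕ => f (R^[n] x)) atTop := limsup_nat_add (fun n : ℕ => f (R^[n] x)) 1
    exact fun s hs => ⟨Measurable.limsup (fun n => hf.comp (hR.measurable.iterate n)) hs,
      Set.ext fun x => by simp only [Set.mem_preimage, limsup_comp]⟩
  · filter_upwards [ae_all_iff.2 iterate_eq] with x hx
    simp only [hx, limsup_const]

lemma mem_lpMeas_invariants_iff {p : ℝ≥0∞} (hR : MeasurePreserving R μ μ) {F : Lp ℝ p μ} :
    F ∈ lpMeas ℝ ℝ (invariants R) p μ ↔ Lp.compMeasurePreserving R hR F = F := by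
  rw [mem_lpMeas_iff_aestronglyMeasurable, Lp.ext_iff]
  have hFR := Lp.coeFn_compMeasurePreserving F hR
  constructor
  · rintro ⟨g, hg, hFg⟩
    have hgR : g ∘ R = g := MeasurableSpace.comp_eq_of_measurable_invariants hg.measurable
    calc _ =ᵐ[μ] F ∘ R := hFR
      _ =ᵐ[μ] g ∘ R := hR.quasiMeasurePreserving.ae_eq_comp hFg
      _ =ᵐ[μ] F := by rw [hgR]; exact hFg.symm
  · intro hF
    obtain ⟨g, hg, hFg⟩ := exists_measurable_invariants_ae_eq hR.quasiMeasurePreserving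
      (Lp.stronglyMeasurable F).measurable (hFR.symm.trans hF)
    exact ⟨g, hg.stronglyMeasurable, hFg⟩

lemma tendsto_birkhoffAverage_compMeasurePreserving (hR : MeasurePreserving R μ μ)
    (F : Lp ℝ 2 μ) :
    Tendsto (fun n => birkhoffAverage ℝ (Lp.compMeasurePreserving R hR) id n F) atTop
      (𝓝 (condExpL2 ℝ ℝ (invariants_le R) F : Lp ℝ 2 μ)) := by
  set U : Lp ℝ 2 μ →L[ℝ] Lp ℝ 2 μ :=
    (Lp.compMeasurePreservingₗᵢ ℝ R hR).toContinuousLinearMap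
  have eqLocus_eq : U.eqLocus (1 : Lp ℝ 2 μ →L[ℝ] Lp ℝ 2 μ) = lpMeas ℝ ℝ (invariants R) 2 μ :=
    Submodule.ext fun F => (mem_lpMeas_invariants_iff hR).symm
  have projection_eq (K : Submodule ℝ (Lp ℝ 2 μ)) [K.HasOrthogonalProjection]
      (hK : K = lpMeas ℝ ℝ (invariants R) 2 μ) :
      (K.orthogonalProjectionOnto F : Lp ℝ 2 μ) = condExpL2 ℝ ℝ (invariants_le R) F := by
    subst hK; rfl
  rw [← projection_eq _ eqLocus_eq]
  exact U.tendsto_birkhoffAverage_orthogonalProjection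
    (LinearIsometry.norm_toContinuousLinearMap_le _) F

lemma coeFn_birkhoffAverage_toLp {p : ℝ≥0∞} (hR : MeasurePreserving R μ μ) (hf : MemLp f p μ)
    (n : ℕ) :
    (birkhoffAverage ℝ (Lp.compMeasurePreserving R hR) id n (hf.toLp f) : Lp ℝ p μ) =ᵐ[μ]
      birkhoffAverage ℝ R f n := by
  have iterate_toLp (k : ℕ) : (Lp.compMeasurePreserving R hR)^[k] (hf.toLp f) =ᵐ[μ] f ∘ R^[k] := by
    rw [Lp.compMeasurePreserving_iterate]
    exact (hf.comp_measurePreserving (hR.iterate k)).coeFn_toLp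
  have birkhoffSum_toLp :
      (birkhoffSum (Lp.compMeasurePreserving R hR) id n (hf.toLp f) : Lp ℝ p μ) =ᵐ[μ]
        birkhoffSum R f n := by
    induction n with
    | zero => exact Lp.coeFn_zero ℝ p μ
    | succ n ih =>
      rw [birkhoffSum_succ, show birkhoffSum R f (n + 1) = birkhoffSum R f n + f ∘ R^[n] from
        funext (birkhoffSum_succ R f n)]
      exact (Lp.coeFn_add _ _).trans (ih.add (iterate_toLp n))
  exact (Lp.coeFn_smul _ _).trans (birkhoffSum_toLp.const_smul (n : ℝ)⁻¹)

lemma memLp_birkhoffAverage {p : ℝ≥0∞} (hR : MeasurePreserving R μ μ) (hf : MemLp f p μ) (n : ℕ) :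
    MemLp (birkhoffAverage ℝ R f n) p μ :=
  (memLp_finsetSum _ fun k _ => hf.comp_measurePreserving (hR.iterate k)).const_smul (n : ℝ)⁻¹

theorem tendsto_eLpNorm_birkhoffAverage_sub_condExp [IsFiniteMeasure μ]
    (hR : MeasurePreserving R μ μ) (hf : MemLp f 2 μ) :
    Tendsto (fun n => eLpNorm (birkhoffAverage ℝ R f n - μ[f | invariants R]) 2 μ) atTop
      (𝓝 0) := by
  refine ((Lp.tendsto_Lp_iff_tendsto_eLpNorm' _ _).1
    (tendsto_birkhoffAverage_compMeasurePreserving hR (hf.toLp f))).congr fun n => ?_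
  exact eLpNorm_congr_ae ((coeFn_birkhoffAverage_toLp hR hf n).sub
    (hf.condExpL2_ae_eq_condExp (invariants_le R)))

lemma tendsto_integral_sq_birkhoffAverage [IsFiniteMeasure μ] (hR : MeasurePreserving R μ μ)
    (hf : MemLp f 2 μ) :
    Tendsto (fun n => ∫ x, birkhoffAverage ℝ R f n x ^ 2 ∂μ) atTop
      (𝓝 (∫ x, (μ[f | invariants R]) x ^ 2 ∂μ)) := by
  have norm_sq_toLp {g : X → ℝ} (hg : MemLp g 2 μ) : ‖hg.toLp g‖ ^ 2 = ∫ x, g x ^ 2 ∂μ := by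
    rw [← real_inner_self_eq_norm_sq, L2.inner_def]
    exact integral_congr_ae (hg.coeFn_toLp.mono fun x hx => by
      simp only [hx, real_inner_self_eq_norm_sq, Real.norm_eq_abs, sq_abs])
  have hlim := (((Lp.tendsto_Lp_iff_tendsto_eLpNorm'' _ (memLp_birkhoffAverage hR hf) _
    (hf.condExp one_le_two)).2 (tendsto_eLpNorm_birkhoffAverage_sub_condExp hR hf)).norm).pow 2
  simpa only [norm_sq_toLp] using hlim

lemma condExp_invariants_comp [IsFiniteMeasure μ] {S T : X → X} (hS : MeasurePreserving S μ μ)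
    (hT : MeasurePreserving T μ μ) (hST : Function.Commute S T) (hf : MemLp f 2 μ) :
    μ[f ∘ T | invariants S] =ᵐ[μ] μ[f | invariants S] ∘ T := by
  have hfT := hf.comp_measurePreserving hT
  have birkhoffAverage_comp (n : ℕ) :
      birkhoffAverage ℝ S (f ∘ T) n = birkhoffAverage ℝ S f n ∘ T := by
    funext x
    simp only [birkhoffAverage, birkhoffSum, Function.comp_apply, (hST.iterate_left _).eq]
  have hlim : Tendsto (fun n => eLpNorm (birkhoffAverage ℝ S (f ∘ T) n -
      μ[f | invariants S] ∘ T) 2 μ) atTop (𝓝 0) := by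
    refine (tendsto_eLpNorm_birkhoffAverage_sub_condExp hS hf).congr fun n => ?_
    rw [birkhoffAverage_comp, ← eLpNorm_comp_measurePreserving _ hT]
    · rfl
    · exact ((memLp_birkhoffAverage hS hf n).sub (hf.condExp one_le_two)).1
  have hmem := memLp_birkhoffAverage hS hfT
  exact tendstoInMeasure_ae_unique
    (tendstoInMeasure_of_tendsto_eLpNorm two_ne_zero (fun n => (hmem n).1)
      (hfT.condExp one_le_two).1 (tendsto_eLpNorm_birkhoffAverage_sub_condExp hS hfT))
    (tendstoInMeasure_of_tendsto_eLpNorm two_ne_zero (fun n => (hmem n).1)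
      ((hf.condExp one_le_two).comp_measurePreserving hT).1 hlim)

end MeanErgodic

section OrbitArray

open Finset
open scoped BigOperators

variable {X : Type*} {S T : X → X} {f : X → ℝ}

/-- The values of `f` along the `ℕ²`-orbit of `y` under two transformations. -/
def orbitArray (S T : X → X) (f : X → ℝ) (y : X) (i j : ℕ) : ℝ := f (S^[i] (T^[j] y))

lemma orbitArray_add_add (hST : Function.Commute S T) (x : X) (p q i j : ℕ) :
    orbitArray S T f x (p + i) (q + j) = orbitArray S T f (T^[q] (S^[p] x)) i j := by
  rw [orbitArray, orbitArray, add_comm p, add_comm q, Function.iterate_add_apply,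
    Function.iterate_add_apply, (hST.iterate_iterate p j).eq, (hST.iterate_iterate p q).eq]

lemma boxAverage_orbitArray (hST : Function.Commute S T) (s : Finset ℕ) (H : ℕ) (y : X) :
    boxAverage (range H) s (orbitArray S T f y) = 𝔼 j ∈ s, 𝔼 j' ∈ s,
      birkhoffAverage ℝ S (fun x => f (T^[j] x) * f (T^[j'] x)) H y ^ 2 := by
  simp only [boxAverage, orbitArray, birkhoffAverage_eq_expect, (hST.iterate_iterate _ _).eq]

end OrbitArray

section Joinings

open MeasurableSpace (invariants invariants_le)
open Finset
open scoped BigOperators Topology ENNReal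

variable {X : Type*} [MeasurableSpace X] {μ : Measure X}

lemma invSigma_eq_invariants (R : X → X) : invSigma R = invariants R :=
  MeasurableSpace.ext fun _ => Iff.rfl

namespace IsRelIndJoining

variable {R T : X → X} {μ2 : Measure (X × X)}

lemma measureReal_prod (h : IsRelIndJoining μ R μ2) {s t : Set X} (hs : MeasurableSet s)
    (ht : MeasurableSet t) :
    μ2.real (s ×ˢ t) =
      ∫ x, (μ[s.indicator 1 | invariants R]) x * (μ[t.indicator 1 | invariants R]) x ∂μ := by
  have indicator_le (u : Set X) : ∃ C : ℝ, ∀ x, |u.indicator 1 x| ≤ C :=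
    ⟨1, fun x => by by_cases hx : x ∈ u <;> simp [hx]⟩
  rw [← invSigma_eq_invariants, ← h _ _ (measurable_one.indicator hs) (measurable_one.indicator ht)
    (indicator_le s) (indicator_le t), ← integral_indicator_one (hs.prod ht)]
  simp only [← Set.indicator_prod_one]

lemma isProbabilityMeasure [IsProbabilityMeasure μ] (h : IsRelIndJoining μ R μ2) :
    IsProbabilityMeasure μ2 := by
  have huniv := h.measureReal_prod .univ .univ
  have condExp_one : μ[(1 : X → ℝ) | invariants R] = 1 := condExp_const (invariants_le R) 1
  simp only [Set.univ_prod_univ, Set.indicator_univ, condExp_one, Pi.one_apply, mul_one,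
    integral_const, probReal_univ, smul_eq_mul] at huniv
  exact ⟨(ENNReal.toReal_eq_one_iff _).1 huniv⟩

lemma measurePreserving_prodMap [IsProbabilityMeasure μ] (h : IsRelIndJoining μ R μ2)
    (hR : MeasurePreserving R μ μ) (hT : MeasurePreserving T μ μ) (hRT : Function.Commute R T) :
    MeasurePreserving (Prod.map T T) μ2 μ2 := by
  have := h.isProbabilityMeasure
  have hTT : Measurable (Prod.map T T) := hT.measurable.prodMap hT.measurable
  refine ⟨hTT, ?_⟩
  have := Measure.isProbabilityMeasure_map (μ := μ2) hTT.aemeasurable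
  refine Measure.ext_prod fun {s t} hs ht => ?_
  have condExp_preimage {u : Set X} (hu : MeasurableSet u) :
      μ[(T ⁻¹' u).indicator (1 : X → ℝ) | invariants R] =ᵐ[μ]
        μ[u.indicator (1 : X → ℝ) | invariants R] ∘ T :=
    condExp_invariants_comp hR hT hRT (memLp_indicator_const 2 hu 1 (.inr (measure_ne_top μ u)))
  have measureReal_preimage : μ2.real ((T ⁻¹' s) ×ˢ (T ⁻¹' t)) = μ2.real (s ×ˢ t) := by
    rw [h.measureReal_prod (hT.measurable hs) (hT.measurable ht), h.measureReal_prod hs ht]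
    refine (integral_congr_ae ?_).trans (integral_comp_of_measurePreserving hT
      (integrable_condExp.aestronglyMeasurable.fun_mul integrable_condExp.aestronglyMeasurable))
    filter_upwards [condExp_preimage hs, condExp_preimage ht] with x hxs hxt
    rw [hxs, hxt]
    rfl
  rw [Measure.map_apply hTT (hs.prod ht)]
  exact (measureReal_eq_measureReal_iff).1 measureReal_preimage

end IsRelIndJoining

lemma IsHostJoining.hostSeminorm_eq_zero_iff {μ2 : Measure (X × X)} {T : X → X}
    {μ4 : Measure (X × X × X × X)} (h : IsHostJoining μ2 T μ4) {f : X → ℝ} (hf : Measurable f)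
    (hb : ∃ C, ∀ x, |f x| ≤ C) :
    hostSeminorm μ4 f = 0 ↔
      ∫ q, (μ2[fun r => f r.1 * f r.2 | invariants (Prod.map T T)]) q ^ 2 ∂μ2 = 0 := by
  rw [hostSeminorm, h f f f f hf hf hf hf hb hb hb hb, invSigma_eq_invariants]
  simp only [← sq]
  rw [Real.rpow_eq_zero (integral_nonneg fun q => sq_nonneg _) (by norm_num)]

variable {S T : X → X} {f : X → ℝ}

lemma measurable_boxAverage_orbitArray (hS : Measurable S) (hT : Measurable T)
    (hf : Measurable f) (s t : Finset ℕ) :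
    Measurable fun y => boxAverage s t (orbitArray S T f y) :=
  have hij (i j : ℕ) : Measurable fun y => orbitArray S T f y i j :=
    hf.comp ((hS.iterate i).comp (hT.iterate j))
  measurable_expect fun j _ => measurable_expect fun j' _ =>
    (measurable_expect fun i _ => (hij i j).mul (hij i j')).pow_const 2

lemma IsRelIndJoining.integral_sq_birkhoffAverage [IsProbabilityMeasure μ] {μS : Measure (X × X)}
    (hμS : IsRelIndJoining μ S μS) (hT : Measurable T) (hf : Measurable f)
    (hb : ∃ C, ∀ x, |f x| ≤ C) (K : ℕ) :
    ∫ r, birkhoffAverage ℝ (Prod.map T T) (fun r => f r.1 * f r.2) K r ^ 2 ∂μS =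
      𝔼 j ∈ range K, 𝔼 j' ∈ range K,
        ∫ x, (μ[fun y => f (T^[j] y) * f (T^[j'] y) | invariants S]) x ^ 2 ∂μ := by
  have := hμS.isProbabilityMeasure
  set F : ℕ → ℕ → X → ℝ := fun j j' y => f (T^[j] y) * f (T^[j'] y)
  have hF (j j' : ℕ) : Measurable (F j j') := (hf.comp (hT.iterate j)).mul (hf.comp (hT.iterate j'))
  have F_bounded (j j' : ℕ) : ∃ C, ∀ y, |F j j' y| ≤ C :=
    exists_forall_abs_mul_le (hb.imp fun _ h _ => h _) (hb.imp fun _ h _ => h _)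
  have integrable_F (j j' : ℕ) : Integrable (fun r : X × X => F j j' r.1 * F j j' r.2) μS :=
    memLp_one_iff_integrable.1 <| memLp_of_exists_forall_abs_le
      (((hF j j').comp measurable_fst).mul ((hF j j').comp measurable_snd))
      (exists_forall_abs_mul_le ((F_bounded j j').imp fun _ h _ => h _)
        ((F_bounded j j').imp fun _ h _ => h _))
  have sq_birkhoffAverage (r : X × X) :
      birkhoffAverage ℝ (Prod.map T T) (fun r => f r.1 * f r.2) K r ^ 2 =
        𝔼 j ∈ range K, 𝔼 j' ∈ range K, F j j' r.1 * F j j' r.2 := by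
    simp only [birkhoffAverage_eq_expect, sq, expect_mul_expect, Prod.map_iterate, Prod.map_fst,
      Prod.map_snd, F, mul_mul_mul_comm]
  simp only [sq_birkhoffAverage]
  rw [integral_expect fun j _ => integrable_expect fun j' _ => integrable_F j j']
  refine expect_congr rfl fun j _ => ?_
  rw [integral_expect fun j' _ => integrable_F j j']
  refine expect_congr rfl fun j' _ => ?_
  rw [hμS _ _ (hF j j') (hF j j') (F_bounded j j') (F_bounded j j'), invSigma_eq_invariants]
  simp only [← sq, F]

lemma tendsto_integral_boxAverage_orbitArray [IsFiniteMeasure μ] (hS : MeasurePreserving S μ μ)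
    (hT : MeasurePreserving T μ μ) (hST : Function.Commute S T) (hf : MemLp f 4 μ)
    (s : Finset ℕ) :
    Tendsto (fun H => ∫ y, boxAverage (range H) s (orbitArray S T f y) ∂μ) atTop
      (𝓝 (𝔼 j ∈ s, 𝔼 j' ∈ s,
        ∫ x, (μ[fun y => f (T^[j] y) * f (T^[j'] y) | invariants S]) x ^ 2 ∂μ)) := by
  have mul_memLp (j j' : ℕ) : MemLp (fun y => f (T^[j] y) * f (T^[j'] y)) 2 μ :=
    have : ENNReal.HolderTriple 4 4 2 := ⟨by
      rw [← two_mul, show (4 : ℝ≥0∞) = 2 * 2 by norm_num,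
        ENNReal.mul_inv (.inl two_ne_zero) (.inl ENNReal.ofNat_ne_top), ← mul_assoc,
        ENNReal.mul_inv_cancel two_ne_zero ENNReal.ofNat_ne_top, one_mul]⟩
    (hf.comp_measurePreserving (hT.iterate j')).mul (hf.comp_measurePreserving (hT.iterate j))
  have integrable_sq (H j j' : ℕ) :
      Integrable (fun y => birkhoffAverage ℝ S (fun x => f (T^[j] x) * f (T^[j'] x)) H y ^ 2) μ :=
    (memLp_birkhoffAverage hS (mul_memLp j j') H).integrable_sq
  have integral_eq (H : ℕ) : ∫ y, boxAverage (range H) s (orbitArray S T f y) ∂μ =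
      𝔼 j ∈ s, 𝔼 j' ∈ s,
        ∫ y, birkhoffAverage ℝ S (fun x => f (T^[j] x) * f (T^[j'] x)) H y ^ 2 ∂μ := by
    simp only [boxAverage_orbitArray hST]
    rw [integral_expect fun j _ => integrable_expect fun j' _ => integrable_sq H j j']
    exact expect_congr rfl fun j _ => integral_expect fun j' _ => integrable_sq H j j'
  simp only [integral_eq]
  exact tendsto_expect fun j _ => tendsto_expect fun j' _ =>
    tendsto_integral_sq_birkhoffAverage hS (mul_memLp j j')

lemma exists_integral_boxAverage_orbitArray_lt [IsProbabilityMeasure μ] {μS : Measure (X × X)}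
    (hS : MeasurePreserving S μ μ) (hT : MeasurePreserving T μ μ) (hST : Function.Commute S T)
    (hμS : IsRelIndJoining μ S μS) (hf : Measurable f) (hb : ∃ C, ∀ x, |f x| ≤ C) {δ : ℝ}
    (hδ : ∫ r, (μS[fun r => f r.1 * f r.2 | invariants (Prod.map T T)]) r ^ 2 ∂μS < δ) :
    ∃ H > 0, ∃ K > 0, ∫ y, boxAverage (range H) (range K) (orbitArray S T f y) ∂μ < δ := by
  have := hμS.isProbabilityMeasure
  have tensor_memLp : MemLp (fun r : X × X => f r.1 * f r.2) 2 μS :=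
    memLp_of_exists_forall_abs_le ((hf.comp measurable_fst).mul (hf.comp measurable_snd))
      (exists_forall_abs_mul_le (hb.imp fun _ h _ => h _) (hb.imp fun _ h _ => h _))
  obtain ⟨K, hK_lt, hK⟩ := (((tendsto_integral_sq_birkhoffAverage
    (hμS.measurePreserving_prodMap hS hT hST) tensor_memLp).eventually_lt_const hδ).and
      (eventually_gt_atTop 0)).exists
  rw [hμS.integral_sq_birkhoffAverage hT.measurable hf hb] at hK_lt
  obtain ⟨H, hH_lt, hH⟩ := (((tendsto_integral_boxAverage_orbitArray hS hT hST
    (memLp_of_exists_forall_abs_le hf hb) (range K)).eventually_lt_const hK_lt).and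
      (eventually_gt_atTop 0)).exists
  exact ⟨H, hH, K, hK, hH_lt⟩

theorem pointwise_cubic_average_zero_of_condexp_zero_general [IsProbabilityMeasure μ]
    (hS : MeasurePreserving S μ μ) (hT : MeasurePreserving T μ μ) (hST : Function.Commute S T)
    {μS : Measure (X × X)} (hμS : IsRelIndJoining μ S μS)
    {μST : Measure (X × X × X × X)} (hμST : IsHostJoining μS T μST)
    (hf : Measurable f) (hb : ∃ C, ∀ x, |f x| ≤ C) (hf₀ : hostSeminorm μST f = 0) :
    ∀ᵐ x ∂μ, ∀ u v : ℕ → ℝ, (∃ C, ∀ i, |u i| ≤ C) → (∃ C, ∀ j, |v j| ≤ C) →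
      Tendsto (fun N : ℕ => ((N : ℝ) ^ 2)⁻¹ * ∑ i ∈ range N, ∑ j ∈ range N,
        u i * v j * f (S^[i] (T^[j] x))) atTop (𝓝 0) := by
  have small_boxAverage : ∀ δ > 0, ∃ i : ℕ × ℕ,
      ∫ y, boxAverage (range i.1.succ) (range i.2.succ) (orbitArray S T f y) ∂μ < δ := by
    intro δ hδ
    rw [hμST.hostSeminorm_eq_zero_iff hf hb] at hf₀
    obtain ⟨H, hH, K, hK, h⟩ :=
      exists_integral_boxAverage_orbitArray_lt hS hT hST hμS hf hb (hf₀.trans_lt hδ)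
    exact ⟨(H.pred, K.pred), by rwa [Nat.succ_pred hH.ne', Nat.succ_pred hK.ne']⟩
  obtain ⟨A, hA⟩ := hb
  filter_upwards [ae_forall_exists_forall_expect_expect_le hS hT
    (fun i => measurable_boxAverage_orbitArray hS.measurable hT.measurable hf _ _)
    (fun i y => boxAverage_nonneg _ _ _) (fun i y => boxAverage_le_pow_four fun _ _ => hA _)
    small_boxAverage] with x hx u v ⟨C, hu⟩ ⟨D, hv⟩
  simp only [inv_sq_mul_sum_sum_eq_expect_expect]
  refine tendsto_expect_expect_mul_mul_of_boxAverage (a := orbitArray S T f x) (fun _ _ => hA _)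
    (fun ε hε => ?_) hu hv
  obtain ⟨⟨H, K⟩, hHK⟩ := hx ε hε
  refine ⟨H.succ, H.succ_pos, K.succ, K.succ_pos, .of_forall fun N => ?_⟩
  simpa only [orbitArray_add_add hST] using hHK N

end Joinings

/-- in a free ergodic magic system, if `E(f3 | I_S ∨ I_T) = 0` then the cubic
averages converge to `0` almost everywhere. -/
theorem pointwise_cubic_average_zero_of_condexp_zero {X : Type*} [MeasurableSpace X]
    (μ : Measure X) [IsProbabilityMeasure μ]
    (S T : X ≃ᵐ X) (hS : MeasurePreserving S μ μ) (hT : MeasurePreserving T μ μ)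
    (hcomm : ∀ x, S (T x) = T (S x))
    (herg : ∀ s : Set X, MeasurableSet s → ⇑S ⁻¹' s = s → ⇑T ⁻¹' s = s → μ s = 0 ∨ μ s = 1)
    (hfree : ∀ i j : ℤ, ¬(i = 0 ∧ j = 0) →
      μ {x | (S.toEquiv ^ i) ((T.toEquiv ^ j) x) = x} = 0)
    (μS : Measure (X × X)) (hμS : IsRelIndJoining μ ⇑S μS)
    (μST : Measure (X × X × X × X)) (hμST : IsHostJoining μS ⇑T μST)
    (hmagic : ∀ f : X → ℝ, Measurable f → (∃ C, ∀ x, |f x| ≤ C) →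
      ((μ[f | invSigma ⇑S ⊔ invSigma ⇑T]) =ᵐ[μ] 0 ↔ hostSeminorm μST f = 0))
    (f1 f2 f3 : X → ℝ) (hf1 : Measurable f1) (hf2 : Measurable f2) (hf3 : Measurable f3)
    (hb1 : ∃ C, ∀ x, |f1 x| ≤ C) (hb2 : ∃ C, ∀ x, |f2 x| ≤ C) (hb3 : ∃ C, ∀ x, |f3 x| ≤ C)
    (hcond : (μ[f3 | invSigma ⇑S ⊔ invSigma ⇑T]) =ᵐ[μ] 0) :
    ∀ᵐ x ∂μ, Tendsto (fun N : ℕ =>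
      ((N : ℝ) ^ 2)⁻¹ * ∑ i ∈ Finset.range N, ∑ j ∈ Finset.range N,
        f1 ((⇑S)^[i] x) * f2 ((⇑T)^[j] x) * f3 ((⇑S)^[i] ((⇑T)^[j] x)))
      atTop (nhds 0) := by
  have hae := pointwise_cubic_average_zero_of_condexp_zero_general hS hT hcomm hμS hμST hf3 hb3
    ((hmagic f3 hf3 hb3).1 hcond)
  exact hae.mono fun x hx => hx _ _ (hb1.imp fun _ h _ => h _) (hb2.imp fun _ h _ => h _)
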